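/- There exists an irreducible plane sextic C = V(F) ⊂ ℂP² that is not of torus type (there are no homogeneous f₂, f₃ of degrees 2 and 3 with F = f₂³ + f₃²) and whose fundamental group π₁(ℂP² ∖ C) is nonabelian. (This disproves the fundamental-group part of Oka's original conjecture.) -/

import Mathlib

/-!
The example is the sextic `F` determined by the identity `A² - 4 G⁵ = z⁴ F` with
`A = y z⁴ + 2 x⁵ - 5 x³ z²` and `G = x² - z²`.

*Irreducibility.* As a polynomial in `y`, the sextic `F` is a primitive quadratic over `ℂ[x, z]`
with discriminant `16 (x² - z²)⁵`, which is not a square (`sextic_irreducible`).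

*Not of torus type.* On the line `z = 0` the form `F` becomes `4 t - 15` with `t = y / x`, and a
polynomial of degree one is never `f³ + g²` with `deg f ≤ 2`, `deg g ≤ 3` (`sextic_not_torus`).

*Nonabelian fundamental group.* On the affine variety `F = 4`, an unramified cyclic covering of
degree `6` of the complement, the identity reads `(A + 2 z²)(A - 2 z²) = 4 G⁵`. The numbers `u`, `v`
with `2 u⁵ = A + 2 z²`, `2 v⁵ = A - 2 z²`, `u v = G` therefore exist everywhere, do not vanish
simultaneously, and are unique up to `(ζ u, ζ⁻¹ v)` with `ζ⁵ = 1`. Adjoining them yields a covering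
of the complement on which a finite group acts freely with the fibres as orbits: it is generated
by these changes and by the maps `(p, u, v) ↦ (l p, l v, l u)` with `l³ = -1`
(`isQuotientCoveringMap_coverMap`; that the projection is a quotient map follows from the
properness of taking roots). The covering need not be connected, so it remains to exhibit two
non-commuting elements realized by loops. They come from the line `x = 0`, where the covering is
parametrized by `y / z = 2 sinh τ`, `u = exp (τ/5) / l`, `v = -exp (-τ/5) / l`, `l³ = cosh τ`: the
paths in `τ` from `0` to `πi` and to `-πi` passing to the right of `±πi/2` are lifts of loops, and
the corresponding deck transformations do not commute (`joined_deckElt`, `deckElt_not_commute`).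
The complement is path-connected, so the base point is irrelevant.
-/

open MvPolynomial Function

noncomputable section

/-- The complex projective plane `ℙ(ℂ³)`. -/
abbrev CP2 : Type := Projectivization ℂ (Fin 3 → ℂ)

/-- The quotient topology on `ℂP²` coming from `ℂ³ ∖ {0}`. -/
instance : TopologicalSpace CP2 :=
  inferInstanceAs (TopologicalSpace (Quotient (projectivizationSetoid ℂ (Fin 3 → ℂ))))

/-- The zero locus in `ℂP²` of a (homogeneous) polynomial `F ∈ ℂ[x,y,z]`. -/
def zeroLocus (F : MvPolynomial (Fin 3) ℂ) : Set CP2 :=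
  {p | eval p.rep F = 0}

/-- The complement `ℂP² ∖ V(F)` as a topological space. -/
abbrev CurveComplement (F : MvPolynomial (Fin 3) ℂ) : Type :=
  {x : CP2 // x ∉ zeroLocus F}

/-- A sextic `F` is of torus type if `F = f₂³ + f₃²` with `f₂, f₃` homogeneous of
degrees `2` and `3`. -/
def IsTorusType (F : MvPolynomial (Fin 3) ℂ) : Prop :=
  ∃ f2 f3 : MvPolynomial (Fin 3) ℂ,
    f2.IsHomogeneous 2 ∧ f3.IsHomogeneous 3 ∧ F = f2 ^ 3 + f3 ^ 2

/-! ### The sextic: irreducibility and failure of torus type -/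

/-- The sextic `F = y² z⁴ + y (4 x⁵ - 10 x³ z²) + (-15 x⁶ + 40 x⁴ z² - 20 x² z⁴ + 4 z⁶)`, where
`y`, `x`, `z` are the variables `X 0`, `X 1`, `X 2`. -/
def sextic : MvPolynomial (Fin 3) ℂ :=
  X 0 ^ 2 * X 2 ^ 4 + X 0 * (4 * X 1 ^ 5 - 10 * X 1 ^ 3 * X 2 ^ 2)
    + (-15 * X 1 ^ 6 + 40 * X 1 ^ 4 * X 2 ^ 2 - 20 * X 1 ^ 2 * X 2 ^ 4 + 4 * X 2 ^ 6)

lemma sextic_homog : sextic.IsHomogeneous 6 := by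
  have hx (i : Fin 3) : (X i : MvPolynomial (Fin 3) ℂ).IsHomogeneous 1 := isHomogeneous_X ℂ i
  have hxp (i : Fin 3) (n : ℕ) : (X i ^ n : MvPolynomial (Fin 3) ℂ).IsHomogeneous n :=
    isHomogeneous_X_pow i n
  have hc (n : ℕ) [n.AtLeastTwo] :
      (OfNat.ofNat n : MvPolynomial (Fin 3) ℂ).IsHomogeneous 0 := by
    rw [← map_ofNat (C : ℂ →+* MvPolynomial (Fin 3) ℂ) n]
    exact isHomogeneous_C _ _
  have hc' : (-15 : MvPolynomial (Fin 3) ℂ).IsHomogeneous 0 := (hc 15).neg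
  unfold sextic
  exact ((((hxp 0 2).mul (hxp 2 4)).add ((hx 0).mul
    (((hc 4).mul (hxp 1 5)).sub (((hc 10).mul (hxp 1 3)).mul (hxp 2 2))))).add
    ((((hc'.mul (hxp 1 6)).add (((hc 40).mul (hxp 1 4)).mul (hxp 2 2))).sub
      (((hc 20).mul (hxp 1 2)).mul (hxp 2 4))).add ((hc 4).mul (hxp 2 6))))

/-- The hypotheses say that all coefficients in degrees `2` to `6` of
`(a t² + l t + q)³ + (b t³ + m t² + n t + k)²` vanish while the coefficient of `t` is `4`. The
vanishing forces the quadratic polynomial to be `-c²` and the cubic one to be `c³` for a linear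
`c`, or both to be constant, and then the sum is constant. -/
lemma no_davenport (a l q b m n k : ℂ) (h6 : a ^ 3 + b ^ 2 = 0)
    (h5 : 3 * a ^ 2 * l + 2 * b * m = 0)
    (h4 : 3 * a * l ^ 2 + 3 * a ^ 2 * q + m ^ 2 + 2 * b * n = 0)
    (h3 : l ^ 3 + 6 * a * l * q + 2 * b * k + 2 * m * n = 0)
    (h2 : 3 * a * q ^ 2 + 3 * l ^ 2 * q + n ^ 2 + 2 * m * k = 0)
    (h1 : 3 * l * q ^ 2 + 2 * n * k = 4) : False := by
  by_cases ha : a = 0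
  · subst ha
    have hb : b = 0 := by simpa using h6
    subst hb
    have hm : m = 0 := by simpa using h4
    subst hm
    have hl : l = 0 := by simpa using h3
    subst hl
    have hn : n = 0 := by simpa using h2
    subst hn
    norm_num at h1
  -- `a³ = -b²` gives the parametrization `a = -μ²`, `b = μ³`
  · obtain ⟨μ, rfl, rfl⟩ : ∃ μ : ℂ, a = -μ ^ 2 ∧ b = μ ^ 3 := by
      refine ⟨-b / a, ?_, ?_⟩
      · field_simp; linear_combination h6
      · field_simp; linear_combination b * h6
    have hμ : μ ≠ 0 := by rintro rfl; simp at ha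
    have hm : m = -3 / 2 * μ * l := by
      have : μ ^ 3 * (m + 3 / 2 * μ * l) = 0 := by linear_combination h5 / 2
      have := (mul_eq_zero.mp this).resolve_left (by positivity)
      linear_combination this
    subst hm
    have hn : n = 3 / 8 * l ^ 2 / μ - 3 / 2 * μ * q := by
      field_simp
      have : μ ^ 2 * (n * μ - (3 / 8 * l ^ 2 - 3 / 2 * μ ^ 2 * q)) = 0 := by
        linear_combination h4 / 2
      have := (mul_eq_zero.mp this).resolve_left (by positivity)
      linear_combination 16 * this
    subst hn
    have hk : k = l ^ 3 / (16 * μ ^ 3) + 3 / 4 * l * q / μ := by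
      field_simp at h3 ⊢
      linear_combination 2 * h3
    subst hk
    have e2 : (μ * q + l ^ 2 / (4 * μ)) ^ 2 = 0 := by
      field_simp at h2 ⊢
      linear_combination (-4 / 3 / 1024) * h2
    have e : q + l ^ 2 / (4 * μ ^ 2) = 0 := by
      have := pow_eq_zero_iff (two_ne_zero) |>.mp e2
      field_simp at this ⊢
      linear_combination this
    have : (4 : ℂ) = 3 / 4 * l * (q + l ^ 2 / (4 * μ ^ 2)) ^ 2 := by
      refine h1.symm.trans ?_; field_simp; ring
    rw [e] at this
    norm_num at this

/-- Coefficientwise form of the vanishing of a sextic polynomial up to its constant term. -/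
lemma coeff_eq_zero_of_deg_six (a b c d e f g : ℂ)
    (h : Polynomial.C a * Polynomial.X ^ 6 + Polynomial.C b * Polynomial.X ^ 5
      + Polynomial.C c * Polynomial.X ^ 4 + Polynomial.C d * Polynomial.X ^ 3
      + Polynomial.C e * Polynomial.X ^ 2 + Polynomial.C f * Polynomial.X + Polynomial.C g = 0) :
    a = 0 ∧ b = 0 ∧ c = 0 ∧ d = 0 ∧ e = 0 ∧ f = 0 := by
  have c (i : ℕ) := congrArg (fun p => Polynomial.coeff p i) h
  refine ⟨?_, ?_, ?_, ?_, ?_, ?_⟩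
  · simpa [Polynomial.coeff_X, Polynomial.coeff_C, Polynomial.coeff_X_pow] using c 6
  · simpa [Polynomial.coeff_X, Polynomial.coeff_C, Polynomial.coeff_X_pow] using c 5
  · simpa [Polynomial.coeff_X, Polynomial.coeff_C, Polynomial.coeff_X_pow] using c 4
  · simpa [Polynomial.coeff_X, Polynomial.coeff_C, Polynomial.coeff_X_pow] using c 3
  · simpa [Polynomial.coeff_X, Polynomial.coeff_C, Polynomial.coeff_X_pow] using c 2
  · simpa [Polynomial.coeff_X, Polynomial.coeff_C, Polynomial.coeff_X_pow] using c 1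

/-- On the line `z = 0`, in the coordinate `t = y / x`, the sextic becomes `4 t - 15`, which is not
of the form `f³ + g²` with `deg f ≤ 2` and `deg g ≤ 3`. -/
lemma sextic_not_torus (f2 f3 : MvPolynomial (Fin 3) ℂ) (h2 : f2.IsHomogeneous 2)
    (h3 : f3.IsHomogeneous 3) (h : sextic = f2 ^ 3 + f3 ^ 2) : False := by
  let φ : MvPolynomial (Fin 3) ℂ →ₐ[ℂ] Polynomial ℂ := aeval ![Polynomial.X, 1, 0]
  have hdeg (i : Fin 3) : ((![Polynomial.X, 1, 0] : Fin 3 → Polynomial ℂ) i).natDegree ≤ 1 := by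
    fin_cases i <;> simp
  have hd2 : (φ f2).natDegree < 3 :=
    Nat.lt_succ_of_le (MvPolynomial.aeval_natDegree_le f2 h2.totalDegree_le _ hdeg)
  have hd3 : (φ f3).natDegree < 4 :=
    Nat.lt_succ_of_le (MvPolynomial.aeval_natDegree_le f3 h3.totalDegree_le _ hdeg)
  have hφ : φ sextic = Polynomial.X * 4 - 15 := by
    simp [φ, sextic]; ring
  rw [h, map_add, map_pow, map_pow] at hφ
  have e2 := (φ f2).as_sum_range_C_mul_X_pow' hd2
  have e3 := (φ f3).as_sum_range_C_mul_X_pow' hd3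
  simp only [Finset.sum_range_succ, Finset.sum_range_zero, zero_add, pow_zero, mul_one, pow_one]
    at e2 e3
  rw [e2, e3] at hφ
  generalize (φ f2).coeff 0 = q, (φ f2).coeff 1 = l, (φ f2).coeff 2 = a,
    (φ f3).coeff 0 = k, (φ f3).coeff 1 = n, (φ f3).coeff 2 = m, (φ f3).coeff 3 = b at hφ
  obtain ⟨h6, h5, h4, h3, h2, h1⟩ := coeff_eq_zero_of_deg_six (a ^ 3 + b ^ 2)
    (3 * a ^ 2 * l + 2 * b * m) (3 * a * l ^ 2 + 3 * a ^ 2 * q + m ^ 2 + 2 * b * n)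
    (l ^ 3 + 6 * a * l * q + 2 * b * k + 2 * m * n)
    (3 * a * q ^ 2 + 3 * l ^ 2 * q + n ^ 2 + 2 * m * k)
    (3 * l * q ^ 2 + 2 * n * k - 4) (q ^ 3 + k ^ 2 + 15) (by
      simp only [map_add, map_mul, map_pow, map_sub, map_ofNat]
      linear_combination hφ)
  exact no_davenport a l q b m n k h6 h5 h4 h3 h2 (by linear_combination h1)

/-- The sextic as a quadratic polynomial in `y` over `ℂ[x, z]`. It is primitive, and its
discriminant `16 (x² - z²)⁵` is not a square. -/
lemma quadratic_irreducible :
    Irreducible (Polynomial.C (X 1 ^ 4) * Polynomial.X ^ 2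
      + Polynomial.C (4 * X 0 ^ 5 - 10 * X 0 ^ 3 * X 1 ^ 2) * Polynomial.X
      + Polynomial.C (-15 * X 0 ^ 6 + 40 * X 0 ^ 4 * X 1 ^ 2
        - 20 * X 0 ^ 2 * X 1 ^ 4 + 4 * X 1 ^ 6) : Polynomial (MvPolynomial (Fin 2) ℂ)) := by
  set p : MvPolynomial (Fin 2) ℂ := 4 * X 0 ^ 5 - 10 * X 0 ^ 3 * X 1 ^ 2 with hp
  set q : MvPolynomial (Fin 2) ℂ := -15 * X 0 ^ 6 + 40 * X 0 ^ 4 * X 1 ^ 2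
        - 20 * X 0 ^ 2 * X 1 ^ 4 + 4 * X 1 ^ 6 with hq
  have hcoeff (a b c : MvPolynomial (Fin 2) ℂ) (i : ℕ) :
      (Polynomial.C a * Polynomial.X ^ 2 + Polynomial.C b * Polynomial.X
        + Polynomial.C c).coeff i =
      (if i = 2 then a else 0) + (if 1 = i then b else 0) + (if i = 0 then c else 0) := by
    simp [Polynomial.coeff_X, Polynomial.coeff_C, Polynomial.coeff_X_pow]
  have hz : (X 1 ^ 4 : MvPolynomial (Fin 2) ℂ) ≠ 0 := pow_ne_zero _ (X_ne_zero _)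
  have hdeg := Polynomial.natDegree_quadratic (b := p) (c := q) hz
  have hc := hcoeff (X 1 ^ 4) p q
  set P := Polynomial.C (X 1 ^ 4) * Polynomial.X ^ 2 + Polynomial.C p * Polynomial.X
    + Polynomial.C q with hP
  have hP0 : P ≠ 0 := by
    intro h; rw [h] at hdeg; simp at hdeg
  have hc2 : P.coeff 2 = X 1 ^ 4 := by simp [hc]
  have hc1 : P.coeff 1 = p := by simp [hc]
  have hc0 : P.coeff 0 = q := by simp [hc]
  have key (f g : Polynomial (MvPolynomial (Fin 2) ℂ)) (hfg : P = f * g)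
      (hf : f.natDegree = 0) : IsUnit f := by
    rw [Polynomial.eq_C_of_natDegree_eq_zero hf] at hfg ⊢
    set c := f.coeff 0
    have h2 : c ∣ X 1 ^ 4 := ⟨g.coeff 2, by rw [← hc2, hfg, Polynomial.coeff_C_mul]⟩
    have h1 : c ∣ p := ⟨g.coeff 1, by rw [← hc1, hfg, Polynomial.coeff_C_mul]⟩
    have hprime : Prime (X 1 : MvPolynomial (Fin 2) ℂ) := MvPolynomial.X_prime
    obtain ⟨i, -, hi⟩ := (dvd_prime_pow hprime 4).mp h2
    rw [Polynomial.isUnit_C]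
    rcases Nat.eq_zero_or_pos i with rfl | hpos
    · rw [pow_zero] at hi
      exact associated_one_iff_isUnit.mp hi
    · have : (X 1 : MvPolynomial (Fin 2) ℂ) ∣ p :=
        (dvd_pow_self _ hpos.ne').trans (hi.symm.dvd.trans h1)
      obtain ⟨r, hr⟩ := this
      have := congrArg (MvPolynomial.eval ![1, 0]) hr
      simp [hp] at this
  refine ⟨fun hu => ?_, fun f g hfg => ?_⟩
  · have := Polynomial.natDegree_eq_zero_of_isUnit hu
    omega
  have hf0 : f ≠ 0 := by rintro rfl; simp at hfg; exact hP0 hfg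
  have hg0 : g ≠ 0 := by rintro rfl; simp at hfg; exact hP0 hfg
  have hsum : f.natDegree + g.natDegree = 2 := by
    rw [← Polynomial.natDegree_mul hf0 hg0, ← hfg, hdeg]
  rcases Nat.eq_zero_or_pos f.natDegree with hf | hf
  · exact Or.inl (key f g hfg hf)
  rcases Nat.eq_zero_or_pos g.natDegree with hg | hg
  · exact Or.inr (key g f (by rw [hfg, mul_comm]) hg)
  exfalso
  obtain ⟨α, β, rfl⟩ := Polynomial.exists_eq_X_add_C_of_natDegree_le_one (p := f) (by omega)
  obtain ⟨γ, δ, rfl⟩ := Polynomial.exists_eq_X_add_C_of_natDegree_le_one (p := g) (by omega)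
  have hfg' : P = Polynomial.C (α * γ) * Polynomial.X ^ 2
      + Polynomial.C (α * δ + β * γ) * Polynomial.X + Polynomial.C (β * δ) := by
    rw [hfg]; simp only [map_add, map_mul]; ring
  have k2 : α * γ = X 1 ^ 4 := by rw [← hc2, hfg', hcoeff]; simp
  have k1 : α * δ + β * γ = p := by rw [← hc1, hfg', hcoeff]; simp
  have k0 : β * δ = q := by rw [← hc0, hfg', hcoeff]; simp
  have hdisc : (α * δ - β * γ) ^ 2 = p ^ 2 - 4 * X 1 ^ 4 * q := by
    rw [← k2, ← k1, ← k0]; ring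
  -- at `z = 1`, `x = t + 1` the discriminant has a zero of odd order at `t = 0`
  let ψ : MvPolynomial (Fin 2) ℂ →ₐ[ℂ] Polynomial ℂ := aeval ![Polynomial.X + 1, 1]
  have hψ : ψ (α * δ - β * γ) ^ 2
      = Polynomial.X ^ 5 * (16 * (Polynomial.X + 2) ^ 5) := by
    rw [← map_pow, hdisc]
    simp [ψ, hp, hq]
    ring
  generalize ψ (α * δ - β * γ) = h at hψ
  have hX : Prime (Polynomial.X : Polynomial ℂ) := Polynomial.prime_X
  have step (h k : Polynomial ℂ) (e : h ^ 2 = Polynomial.X * k) :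
      ∃ h', h = Polynomial.X * h' ∧ Polynomial.X * h' ^ 2 = k := by
    obtain ⟨h', rfl⟩ := hX.dvd_of_dvd_pow (Dvd.intro k e.symm)
    refine ⟨h', rfl, mul_left_cancel₀ hX.ne_zero ?_⟩
    rw [← e]; ring
  obtain ⟨h₁, -, e₁⟩ := step h (Polynomial.X ^ 4 * (16 * (Polynomial.X + 2) ^ 5))
    (by rw [hψ]; ring)
  obtain ⟨h₂, -, e₂⟩ := step h₁ (Polynomial.X ^ 2 * (16 * (Polynomial.X + 2) ^ 5))
    (mul_left_cancel₀ hX.ne_zero (by rw [e₁]; ring))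
  obtain ⟨h₃, -, e₃⟩ := step h₂ (16 * (Polynomial.X + 2) ^ 5)
    (mul_left_cancel₀ hX.ne_zero (by rw [e₂]; ring))
  have := congrArg (Polynomial.eval 0) e₃
  norm_num at this

lemma sextic_irreducible : Irreducible sextic := by
  rw [← MulEquiv.irreducible_iff (finSuccEquiv ℂ 2)]
  convert! quadratic_irreducible using 1
  have h0 : finSuccEquiv ℂ 2 (X 0) = Polynomial.X := finSuccEquiv_X_zero
  have h1 : finSuccEquiv ℂ 2 (X 1) = Polynomial.C (X 0) := finSuccEquiv_X_succ (j := 0)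
  have h2 : finSuccEquiv ℂ 2 (X 2) = Polynomial.C (X 1) := finSuccEquiv_X_succ (j := 1)
  simp only [sextic, map_add, map_sub, map_mul, map_pow, map_neg, map_ofNat, h0, h1, h2]
  ring

/-! ### The complement and the covering space -/

/-- The value of the sextic at a point of `ℂ³`. -/
def sexticFun (p : Fin 3 → ℂ) : ℂ :=
  p 0 ^ 2 * p 2 ^ 4 + p 0 * (4 * p 1 ^ 5 - 10 * p 1 ^ 3 * p 2 ^ 2)
    + (-15 * p 1 ^ 6 + 40 * p 1 ^ 4 * p 2 ^ 2 - 20 * p 1 ^ 2 * p 2 ^ 4 + 4 * p 2 ^ 6)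

/-- The quintic form `A` of the identity `A² - 4 G⁵ = z⁴ F`. -/
def quinticFun (p : Fin 3 → ℂ) : ℂ := p 0 * p 2 ^ 4 + 2 * p 1 ^ 5 - 5 * p 1 ^ 3 * p 2 ^ 2

/-- The quadratic form `G` of the identity `A² - 4 G⁵ = z⁴ F`. -/
def quadFun (p : Fin 3 → ℂ) : ℂ := p 1 ^ 2 - p 2 ^ 2

/-- The identity responsible for the dihedral cover. -/
lemma quintic_sq_sub (p : Fin 3 → ℂ) :
    quinticFun p ^ 2 - 4 * quadFun p ^ 5 = p 2 ^ 4 * sexticFun p := by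
  simp only [quinticFun, quadFun, sexticFun]; ring

lemma eval_sextic (p : Fin 3 → ℂ) : eval p sextic = sexticFun p := by
  simp [sextic, sexticFun]

lemma sexticFun_smul (c : ℂ) (p : Fin 3 → ℂ) : sexticFun (c • p) = c ^ 6 * sexticFun p := by
  simp only [sexticFun, Pi.smul_apply, smul_eq_mul]; ring

lemma quinticFun_smul (c : ℂ) (p : Fin 3 → ℂ) : quinticFun (c • p) = c ^ 5 * quinticFun p := by
  simp only [quinticFun, Pi.smul_apply, smul_eq_mul]; ring

lemma quadFun_smul (c : ℂ) (p : Fin 3 → ℂ) : quadFun (c • p) = c ^ 2 * quadFun p := by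
  simp only [quadFun, Pi.smul_apply, smul_eq_mul]; ring

@[fun_prop] lemma continuous_sexticFun : Continuous sexticFun := by unfold sexticFun; fun_prop

@[fun_prop] lemma continuous_quinticFun : Continuous quinticFun := by unfold quinticFun; fun_prop

@[fun_prop] lemma continuous_quadFun : Continuous quadFun := by unfold quadFun; fun_prop

lemma ne_zero_of_sexticFun_ne_zero {p : Fin 3 → ℂ} (h : sexticFun p ≠ 0) : p ≠ 0 := by
  rintro rfl; simp [sexticFun] at h

/-- The class in `ℂP² ∖ V(F)` of a vector at which the sextic does not vanish. -/
def toComplement (p : Fin 3 → ℂ) (h : sexticFun p ≠ 0) : CurveComplement sextic :=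
  ⟨Projectivization.mk ℂ p (ne_zero_of_sexticFun_ne_zero h), by
    obtain ⟨c, hc⟩ :=
      Projectivization.exists_smul_eq_mk_rep ℂ p (ne_zero_of_sexticFun_ne_zero h)
    simp only [_root_.zeroLocus, Set.mem_ofPred_eq, eval_sextic, ← hc]
    rw [Units.smul_def, sexticFun_smul]
    exact mul_ne_zero (pow_ne_zero _ c.ne_zero) h⟩

lemma toComplement_eq_iff {p q : Fin 3 → ℂ} (hp : sexticFun p ≠ 0) (hq : sexticFun q ≠ 0) :
    toComplement p hp = toComplement q hq ↔ ∃ c : ℂ, c • q = p := by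
  rw [toComplement, toComplement, Subtype.mk.injEq, Projectivization.mk_eq_mk_iff']

lemma exists_eq_toComplement (x : CurveComplement sextic) :
    ∃ (p : Fin 3 → ℂ) (h : sexticFun p ≠ 0), x = toComplement p h := by
  refine ⟨x.1.rep, ?_, ?_⟩
  · have h : eval x.1.rep sextic ≠ 0 := x.2
    rwa [eval_sextic] at h
  · exact Subtype.ext x.1.mk_rep.symm

lemma continuous_toComplement :
    Continuous fun p : {p : Fin 3 → ℂ // sexticFun p ≠ 0} => toComplement p.1 p.2 := by
  refine Continuous.subtype_mk ?_ _
  have : Continuous (fun v : {v : Fin 3 → ℂ // v ≠ 0} => (Projectivization.mk' ℂ v)) :=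
    continuous_quotient_mk'
  exact this.comp (continuous_subtype_val.subtype_mk fun p => ne_zero_of_sexticFun_ne_zero p.2)

/-- A subset of `ℂP² ∖ V(F)` is open as soon as the cone over it is open in `ℂ³`. -/
lemma isOpen_complement_of_cone {T : Set (CurveComplement sextic)}
    (hT : IsOpen {p : Fin 3 → ℂ | ∃ h : sexticFun p ≠ 0, toComplement p h ∈ T}) : IsOpen T := by
  have hU : IsOpen (Subtype.val '' T : Set CP2) := by
    have : IsOpen ((fun v : {v : Fin 3 → ℂ // v ≠ 0} => (Projectivization.mk' ℂ v)) ⁻¹'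
        (Subtype.val '' T : Set CP2)) := by
      convert hT.preimage (continuous_subtype_val (p := fun v : Fin 3 → ℂ => v ≠ 0)) using 1
      ext ⟨v, hv⟩
      simp only [Set.mem_preimage, Set.mem_image, Set.mem_ofPred_eq]
      constructor
      · rintro ⟨x, hx, hxv⟩
        obtain ⟨q, hq, rfl⟩ := exists_eq_toComplement x
        obtain ⟨a, ha⟩ := (Projectivization.mk_eq_mk_iff' ℂ _ _ _ _).mp hxv
        have hv' : sexticFun v ≠ 0 := by
          intro h0
          apply hq
          rw [← ha, sexticFun_smul, h0, mul_zero]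
        refine ⟨hv', ?_⟩
        rwa [← (toComplement_eq_iff hq hv').mpr ⟨a, ha⟩]
      · rintro ⟨h, hT⟩
        exact ⟨_, hT, rfl⟩
    exact this
  convert hU.preimage continuous_subtype_val using 1
  exact (Set.preimage_image_eq T Subtype.val_injective).symm

/-- The total space of the covering: the affine variety of all `((y, x, z), u, v)` with `F = 4`,
`2 u⁵ = A + 2 z²`, `2 v⁵ = A - 2 z²` and `u v = G`. -/
def coverSet : Set ((Fin 3 → ℂ) × ℂ × ℂ) :=
  {n | sexticFun n.1 = 4 ∧ 2 * n.2.1 ^ 5 = quinticFun n.1 + 2 * n.1 2 ^ 2 ∧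
    2 * n.2.2 ^ 5 = quinticFun n.1 - 2 * n.1 2 ^ 2 ∧ n.2.1 * n.2.2 = quadFun n.1}

lemma isClosed_coverSet : IsClosed coverSet := by
  refine (isClosed_eq (by fun_prop) (by fun_prop)).inter
    ((isClosed_eq (by fun_prop) (by fun_prop)).inter
    ((isClosed_eq (by fun_prop) (by fun_prop)).inter (isClosed_eq (by fun_prop) (by fun_prop))))

instance : LocallyCompactSpace coverSet :=
  isClosed_coverSet.isClosedEmbedding_subtypeVal.locallyCompactSpace

lemma sexticFun_ne_zero_of_mem (n : coverSet) : sexticFun n.1.1 ≠ 0 := by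
  rw [n.2.1]; norm_num

/-- The projection of the total space to `ℂP² ∖ V(F)`. -/
def coverMap (n : coverSet) : CurveComplement sextic :=
  toComplement n.1.1 (sexticFun_ne_zero_of_mem n)

lemma continuous_coverMap : Continuous coverMap :=
  continuous_toComplement.comp
    (Continuous.subtype_mk (continuous_fst.comp continuous_subtype_val) sexticFun_ne_zero_of_mem)

/-- `u` and `v` have no common zero on the cover: otherwise `z = A = 0`, so `x = 0` and `F = 0`. -/
lemma coverSet_ne (n : coverSet) : n.1.2.1 ≠ 0 ∨ n.1.2.2 ≠ 0 := by
  obtain ⟨⟨p, u, v⟩, hS, hu, hv, -⟩ := n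
  by_contra! h
  obtain ⟨rfl, rfl⟩ : u = 0 ∧ v = 0 := h
  have hz : p 2 = 0 := by
    have : p 2 ^ 2 = 0 := by linear_combination (hv - hu) / 4
    simpa using this
  have hx : p 1 = 0 := by
    simp only [quinticFun, hz] at hu
    have : p 1 ^ 5 = 0 := by linear_combination -hu / 2
    simpa using this
  simp [sexticFun, hz, hx] at hS

/-- The fifth roots of two complementary quantities are determined up to a fifth root of unity,
once the product of the roots is prescribed. -/
lemma exists_root_of_unity {a b u v : ℂ} (hu : u ^ 5 = a ^ 5) (hv : v ^ 5 = b ^ 5)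
    (huv : u * v = a * b) (h : a ≠ 0 ∨ b ≠ 0) :
    ∃ ζ : ℂ, ζ ^ 5 = 1 ∧ u = ζ * a ∧ v = ζ⁻¹ * b := by
  rcases h with h | h
  · have hu0 : u ≠ 0 := by
      rintro rfl
      exact h (by simpa using hu.symm)
    refine ⟨u / a, by rw [div_pow, hu, div_self (pow_ne_zero _ h)], by field_simp, ?_⟩
    field_simp; linear_combination huv
  · have hv0 : v ≠ 0 := by
      rintro rfl
      exact h (by simpa using hv.symm)
    refine ⟨b / v, by rw [div_pow, hv, div_self (pow_ne_zero _ h)], ?_, by field_simp⟩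
    field_simp; linear_combination huv

/-- Fifth roots of `α / 2` and `β / 2` can be chosen with the prescribed product `g`. -/
lemma exists_fifth_roots {α β g : ℂ} (h : α * β = 4 * g ^ 5) :
    ∃ u v : ℂ, 2 * u ^ 5 = α ∧ 2 * v ^ 5 = β ∧ u * v = g := by
  obtain ⟨u, hu⟩ := IsAlgClosed.exists_pow_nat_eq (α / 2) (n := 5) (by norm_num)
  by_cases h0 : u = 0
  · have hα : α = 0 := by rw [h0] at hu; linear_combination -2 * hu
    have hg : g = 0 := by
      rw [hα] at h
      have : g ^ 5 = 0 := by linear_combination -h / 4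
      simpa using this
    obtain ⟨v, hv⟩ := IsAlgClosed.exists_pow_nat_eq (β / 2) (n := 5) (by norm_num)
    exact ⟨0, v, by simp [hα], by rw [hv]; ring, by simp [hg]⟩
  · refine ⟨u, g / u, by rw [hu]; ring, ?_, by field_simp⟩
    field_simp
    linear_combination (-h) / 2 - hu * β

/-! ### The projection is a quotient map -/

/-- A subset of a product that is closed and locally bounded over the first factor has closed
projection. -/
lemma isClosed_fst_image {V W : Type*} [MetricSpace V] [NormedAddCommGroup W] [NormedSpace ℝ W]
    [FiniteDimensional ℝ W] {D : Set (V × W)} (hD : IsClosed D) {h : V → ℝ} (hh : Continuous h)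
    (hb : ∀ x ∈ D, ‖x.2‖ ≤ h x.1) : IsClosed (Prod.fst '' D) := by
  have : ProperSpace W := FiniteDimensional.proper_real W
  refine isClosed_of_closure_subset fun v hv => ?_
  obtain ⟨s, hs, hsv⟩ := mem_closure_iff_seq_limit.mp hv
  choose x hxD hxs using hs
  have hlim : Filter.Tendsto (fun n => (x n).1) Filter.atTop (nhds v) := by
    simpa only [hxs] using hsv
  obtain ⟨R, hR⟩ := ((hh.tendsto v).comp hlim).bddAbove_range
  obtain ⟨w, -, φ, hφ, hw⟩ := tendsto_subseq_of_bounded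
    (Metric.isBounded_closedBall (x := (0 : W)) (r := R)) (x := fun n => (x n).2) (fun n => by
      rw [mem_closedBall_zero_iff]
      exact (hb _ (hxD n)).trans (hR ⟨n, rfl⟩))
  refine ⟨(v, w), ?_, rfl⟩
  refine hD.mem_of_tendsto ((hlim.comp hφ.tendsto_atTop).prodMk_nhds hw) ?_
  exact Filter.Eventually.of_forall fun n => hxD (φ n)

lemma le_one_add_pow {t : ℝ} (ht : 0 ≤ t) {n : ℕ} (hn : n ≠ 0) : t ≤ 1 + t ^ n := by
  rcases le_total t 1 with h | h
  · have := pow_nonneg ht n; linarith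
  · have := le_self_pow₀ h hn; linarith

/-- A homogeneous version of the cover: all `(p, l, u, v)` for which `l⁻¹ (p, u, v)` lies in
`coverSet` when `l ≠ 0`; the locus `l = 0` lies over the cone over the sextic. -/
def coneSet : Set ((Fin 3 → ℂ) × ℂ × ℂ × ℂ) :=
  {m | 4 * m.2.1 ^ 6 = sexticFun m.1 ∧
    2 * m.2.2.1 ^ 5 = quinticFun m.1 + 2 * m.2.1 ^ 3 * m.1 2 ^ 2 ∧
    2 * m.2.2.2 ^ 5 = quinticFun m.1 - 2 * m.2.1 ^ 3 * m.1 2 ^ 2 ∧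
    m.2.2.1 * m.2.2.2 = quadFun m.1}

lemma isClosed_coneSet : IsClosed coneSet := by
  refine (isClosed_eq (by fun_prop) (by fun_prop)).inter
    ((isClosed_eq (by fun_prop) (by fun_prop)).inter
    ((isClosed_eq (by fun_prop) (by fun_prop)).inter (isClosed_eq (by fun_prop) (by fun_prop))))

lemma exists_mem_coneSet (p : Fin 3 → ℂ) : ∃ t, (p, t) ∈ coneSet := by
  obtain ⟨l, hl⟩ := IsAlgClosed.exists_pow_nat_eq (sexticFun p / 4) (n := 6) (by norm_num)
  obtain ⟨u, v, hu, hv, huv⟩ := exists_fifth_roots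
    (α := quinticFun p + 2 * l ^ 3 * p 2 ^ 2) (β := quinticFun p - 2 * l ^ 3 * p 2 ^ 2)
    (g := quadFun p) (by linear_combination quintic_sq_sub p - 4 * p 2 ^ 4 * hl)
  exact ⟨(l, u, v), by rw [hl]; ring, hu, hv, huv⟩

lemma smul_mem_coverSet {m : (Fin 3 → ℂ) × ℂ × ℂ × ℂ} (hm : m ∈ coneSet) (hl : m.2.1 ≠ 0) :
    (m.2.1⁻¹ • m.1, m.2.1⁻¹ * m.2.2.1, m.2.1⁻¹ * m.2.2.2) ∈ coverSet := by
  obtain ⟨p, l, u, v⟩ := m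
  obtain ⟨hS, hu, hv, huv⟩ := hm
  simp only at hS hu hv huv hl
  refine ⟨?_, ?_, ?_, ?_⟩
  · simp only [sexticFun_smul, ← hS]; field_simp
  · simp only [quinticFun_smul, Pi.smul_apply, smul_eq_mul]
    field_simp; linear_combination hu
  · simp only [quinticFun_smul, Pi.smul_apply, smul_eq_mul]
    field_simp; linear_combination hv
  · simp only [quadFun_smul]
    field_simp; linear_combination huv

/-- The projection of `coneSet` to `ℂ³` is proper: the remaining coordinates are bounded by a
continuous function of the point of `ℂ³`. -/
lemma coneSet_bound (m : (Fin 3 → ℂ) × ℂ × ℂ × ℂ) (hm : m ∈ coneSet) :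
    ‖m.2‖ ≤ 1 + ‖sexticFun m.1‖ + ‖quinticFun m.1‖
      + (1 + ‖sexticFun m.1‖) ^ 3 * ‖m.1 2‖ ^ 2 := by
  obtain ⟨p, l, u, v⟩ := m
  obtain ⟨hS, hu, hv, -⟩ := hm
  simp only at hS hu hv ⊢
  have hl : ‖l‖ ≤ 1 + ‖sexticFun p‖ := by
    have h1 := le_one_add_pow (norm_nonneg l) (n := 6) (by norm_num)
    have h2 := congrArg norm hS
    rw [norm_mul, norm_pow] at h2
    norm_num at h2
    nlinarith [pow_nonneg (norm_nonneg l) 6]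
  have hB : ‖l ^ 3 * p 2 ^ 2‖ ≤ (1 + ‖sexticFun p‖) ^ 3 * ‖p 2‖ ^ 2 := by
    rw [norm_mul, norm_pow, norm_pow]
    gcongr
  have key (w : ℂ) (ε : ℂ) (hε : ‖ε‖ = 1)
      (hw : 2 * w ^ 5 = quinticFun p + ε * (2 * (l ^ 3 * p 2 ^ 2))) :
      ‖w‖ ≤ 1 + ‖sexticFun p‖ + ‖quinticFun p‖ + (1 + ‖sexticFun p‖) ^ 3 * ‖p 2‖ ^ 2 := by
    have h1 := le_one_add_pow (norm_nonneg w) (n := 5) (by norm_num)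
    have h2 := congrArg norm hw
    have h3 := norm_add_le (quinticFun p) (ε * (2 * (l ^ 3 * p 2 ^ 2)))
    rw [← h2, norm_mul, norm_mul, norm_mul, norm_pow, hε, Complex.norm_ofNat] at h3
    have := norm_nonneg (sexticFun p)
    have := norm_nonneg (quinticFun p)
    linarith
  have hu' := key u 1 (by simp) (by linear_combination hu)
  have hv' := key v (-1) (by simp) (by linear_combination hv)
  simp only [Prod.norm_def, sup_le_iff]
  refine ⟨?_, hu', hv'⟩
  have := norm_nonneg (quinticFun p)
  have := (norm_nonneg _).trans hB
  linarith

lemma coverMap_surjective : Surjective coverMap := by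
  intro x
  obtain ⟨p, hp, rfl⟩ := exists_eq_toComplement x
  obtain ⟨t, ht⟩ := exists_mem_coneSet p
  have hl : t.1 ≠ 0 := by
    intro h
    have := ht.1
    simp only [h] at this
    exact hp (by rw [← this]; norm_num)
  exact ⟨⟨_, smul_mem_coverSet ht hl⟩, (toComplement_eq_iff _ hp).mpr ⟨t.1⁻¹, rfl⟩⟩

/-- If the preimage of `T` is open, then the complement of the cone over `T` is the projection of a
closed subset of `coneSet`, hence closed. -/
lemma isQuotientMap_coverMap : Topology.IsQuotientMap coverMap := by
  refine ⟨Topology.isCoinducing_iff.mpr fun T => ⟨fun hT => isOpen_complement_of_cone ?_,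
    fun h => h.preimage continuous_coverMap⟩, coverMap_surjective⟩
  obtain ⟨O, hO, hOT⟩ := isOpen_induced_iff.mp hT
  have hmem (n : coverSet) : n.1 ∈ O ↔ coverMap n ∈ T := by
    change n ∈ Subtype.val ⁻¹' O ↔ n ∈ coverMap ⁻¹' T
    rw [hOT]
  let σ : (Fin 3 → ℂ) × ℂ × ℂ × ℂ → (Fin 3 → ℂ) × ℂ × ℂ :=
    fun m => (m.2.1⁻¹ • m.1, m.2.1⁻¹ * m.2.2.1, m.2.1⁻¹ * m.2.2.2)
  have hinv : ContinuousOn (fun m : (Fin 3 → ℂ) × ℂ × ℂ × ℂ => m.2.1⁻¹) {m | m.2.1 ≠ 0} :=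
    ContinuousOn.inv₀ (by fun_prop) fun m hm => hm
  have hσ : ContinuousOn σ {m | m.2.1 ≠ 0} := by
    refine (hinv.smul (by fun_prop)).prodMk
      ((hinv.mul (by fun_prop)).prodMk (hinv.mul (by fun_prop)))
  have hopen : IsOpen ({m : (Fin 3 → ℂ) × ℂ × ℂ × ℂ | m.2.1 ≠ 0} ∩ σ ⁻¹' O) :=
    hσ.isOpen_inter_preimage (isOpen_ne_fun (by fun_prop) (by fun_prop)) hO
  have hcl := isClosed_fst_image (isClosed_coneSet.inter hopen.isClosed_compl)
    (h := fun p => 1 + ‖sexticFun p‖ + ‖quinticFun p‖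
      + (1 + ‖sexticFun p‖) ^ 3 * ‖p 2‖ ^ 2) (by fun_prop)
    (fun m hm => coneSet_bound m hm.1)
  rw [← isClosed_compl_iff]
  refine (congrArg IsClosed ?_).mpr hcl
  have hproj (p : Fin 3 → ℂ) (hp : sexticFun p ≠ 0) (t) (ht : (p, t) ∈ coneSet) :
      ∃ hl : t.1 ≠ 0, coverMap ⟨σ (p, t), smul_mem_coverSet ht hl⟩ = toComplement p hp := by
    have hl : t.1 ≠ 0 := by
      intro h
      have := ht.1
      simp only [h] at this
      exact hp (by rw [← this]; norm_num)
    exact ⟨hl, (toComplement_eq_iff _ hp).mpr ⟨t.1⁻¹, rfl⟩⟩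
  ext p
  simp only [Set.mem_compl_iff, Set.mem_ofPred_eq, Set.mem_image, Set.mem_inter_iff,
    Set.mem_preimage]
  constructor
  · intro h
    obtain ⟨t, ht⟩ := exists_mem_coneSet p
    refine ⟨(p, t), ⟨ht, fun ⟨hl, htO⟩ => h ?_⟩, rfl⟩
    have hp : sexticFun p ≠ 0 := by
      rw [← ht.1]
      exact mul_ne_zero (by norm_num) (pow_ne_zero _ hl)
    obtain ⟨hl, he⟩ := hproj p hp t ht
    exact ⟨hp, he ▸ (hmem ⟨_, _⟩).mp htO⟩
  · rintro ⟨⟨p, t⟩, ⟨ht, hn⟩, rfl⟩ ⟨hp, hpT⟩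
    obtain ⟨hl, he⟩ := hproj p hp t ht
    exact hn ⟨hl, (hmem ⟨_, smul_mem_coverSet ht hl⟩).mpr (he ▸ hpT)⟩

/-! ### The deck group -/

/-- The diagonal map `(p, u, v) ↦ (l p, l ζ u, l ζ⁻¹ v)`. -/
def evenMap (l ζ : ℂ) (m : (Fin 3 → ℂ) × ℂ × ℂ) : (Fin 3 → ℂ) × ℂ × ℂ :=
  (l • m.1, l * ζ * m.2.1, l * ζ⁻¹ * m.2.2)

/-- The map `(p, u, v) ↦ (l p, l ζ v, l ζ⁻¹ u)` exchanging the two fifth roots. -/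
def oddMap (l ζ : ℂ) (m : (Fin 3 → ℂ) × ℂ × ℂ) : (Fin 3 → ℂ) × ℂ × ℂ :=
  (l • m.1, l * ζ * m.2.2, l * ζ⁻¹ * m.2.1)

lemma ne_zero_of_pow_five {ζ : ℂ} (h : ζ ^ 5 = 1) : ζ ≠ 0 := by
  rintro rfl; norm_num at h

lemma ne_zero_of_cube {l : ℂ} (h : l ^ 3 = 1 ∨ l ^ 3 = -1) : l ≠ 0 := by
  rintro rfl; norm_num at h

lemma inv_pow_five {ζ : ℂ} (h : ζ ^ 5 = 1) : ζ⁻¹ ^ 5 = 1 := by rw [inv_pow, h, inv_one]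

lemma evenMap_mem {l ζ : ℂ} (hl : l ^ 3 = 1) (hζ : ζ ^ 5 = 1) (n : coverSet) :
    evenMap l ζ n.1 ∈ coverSet := by
  obtain ⟨⟨p, u, v⟩, hS, hu, hv, huv⟩ := n
  have hζ0 := ne_zero_of_pow_five hζ
  have hζi := inv_pow_five hζ
  simp only at hS hu hv huv
  refine ⟨?_, ?_, ?_, ?_⟩ <;>
    simp only [evenMap, sexticFun_smul, quinticFun_smul, quadFun_smul, Pi.smul_apply,
      smul_eq_mul, mul_pow, hζ, hζi]
  · linear_combination l ^ 6 * hS + 4 * (l ^ 3 + 1) * hl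
  · linear_combination l ^ 5 * hu + 2 * l ^ 2 * p 2 ^ 2 * hl
  · linear_combination l ^ 5 * hv - 2 * l ^ 2 * p 2 ^ 2 * hl
  · field_simp; linear_combination l ^ 2 * huv

lemma oddMap_mem {l ζ : ℂ} (hl : l ^ 3 = -1) (hζ : ζ ^ 5 = 1) (n : coverSet) :
    oddMap l ζ n.1 ∈ coverSet := by
  obtain ⟨⟨p, u, v⟩, hS, hu, hv, huv⟩ := n
  have hζ0 := ne_zero_of_pow_five hζ
  have hζi := inv_pow_five hζ
  simp only at hS hu hv huv
  refine ⟨?_, ?_, ?_, ?_⟩ <;>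
    simp only [oddMap, sexticFun_smul, quinticFun_smul, quadFun_smul, Pi.smul_apply,
      smul_eq_mul, mul_pow, hζ, hζi]
  · linear_combination l ^ 6 * hS + 4 * (l ^ 3 - 1) * hl
  · linear_combination l ^ 5 * hv - 2 * l ^ 2 * p 2 ^ 2 * hl
  · linear_combination l ^ 5 * hu + 2 * l ^ 2 * p 2 ^ 2 * hl
  · field_simp; linear_combination l ^ 2 * huv

lemma evenMap_evenMap (l ζ l' ζ' : ℂ) (m) :
    evenMap l ζ (evenMap l' ζ' m) = evenMap (l * l') (ζ * ζ') m := by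
  simp only [evenMap, smul_smul, mul_inv, Prod.mk.injEq, true_and]
  constructor <;> ring

lemma evenMap_oddMap (l ζ l' ζ' : ℂ) (m) :
    evenMap l ζ (oddMap l' ζ' m) = oddMap (l * l') (ζ * ζ') m := by
  simp only [evenMap, oddMap, smul_smul, mul_inv, Prod.mk.injEq, true_and]
  constructor <;> ring

lemma oddMap_evenMap (l ζ l' ζ' : ℂ) (m) :
    oddMap l ζ (evenMap l' ζ' m) = oddMap (l * l') (ζ * ζ'⁻¹) m := by
  simp only [evenMap, oddMap, smul_smul, mul_inv, inv_inv, Prod.mk.injEq, true_and]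
  constructor <;> ring

lemma oddMap_oddMap (l ζ l' ζ' : ℂ) (m) :
    oddMap l ζ (oddMap l' ζ' m) = evenMap (l * l') (ζ * ζ'⁻¹) m := by
  simp only [evenMap, oddMap, smul_smul, mul_inv, inv_inv, Prod.mk.injEq, true_and]
  constructor <;> ring

lemma evenMap_one (m) : evenMap 1 1 m = m := by
  simp [evenMap]

/-- `evenMap l ζ`, for `l³ = 1` and `ζ⁵ = 1`, as a permutation of the cover. -/
def evenPerm (l ζ : ℂ) (hl : l ^ 3 = 1) (hζ : ζ ^ 5 = 1) : Equiv.Perm coverSet where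
  toFun n := ⟨_, evenMap_mem hl hζ n⟩
  invFun n := ⟨_, evenMap_mem (l := l⁻¹) (by rw [inv_pow, hl, inv_one]) (inv_pow_five hζ) n⟩
  left_inv n := Subtype.ext <| by
    have := ne_zero_of_pow_five hζ
    have := ne_zero_of_cube (.inl hl)
    simp only [evenMap_evenMap]
    rw [inv_mul_cancel₀ ‹_›, inv_mul_cancel₀ ‹_›, evenMap_one]
  right_inv n := Subtype.ext <| by
    have := ne_zero_of_pow_five hζ
    have := ne_zero_of_cube (.inl hl)
    simp only [evenMap_evenMap]
    rw [mul_inv_cancel₀ ‹_›, mul_inv_cancel₀ ‹_›, evenMap_one]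

/-- `oddMap l ζ`, for `l³ = -1` and `ζ⁵ = 1`, as a permutation of the cover. -/
def oddPerm (l ζ : ℂ) (hl : l ^ 3 = -1) (hζ : ζ ^ 5 = 1) : Equiv.Perm coverSet where
  toFun n := ⟨_, oddMap_mem hl hζ n⟩
  invFun n := ⟨_, oddMap_mem (l := l⁻¹) (by rw [inv_pow, hl]; norm_num) hζ n⟩
  left_inv n := Subtype.ext <| by
    have := ne_zero_of_pow_five hζ
    have := ne_zero_of_cube (.inr hl)
    simp only [oddMap_oddMap]
    rw [inv_mul_cancel₀ ‹_›, mul_inv_cancel₀ ‹_›, evenMap_one]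
  right_inv n := Subtype.ext <| by
    have := ne_zero_of_pow_five hζ
    have := ne_zero_of_cube (.inr hl)
    simp only [oddMap_oddMap]
    rw [mul_inv_cancel₀ ‹_›, mul_inv_cancel₀ ‹_›, evenMap_one]

/-- The deck transformation group of the cover, of order `30`. -/
def deckGroup : Subgroup (Equiv.Perm coverSet) where
  carrier := {g | ∃ l ζ : ℂ, ζ ^ 5 = 1 ∧ ((l ^ 3 = 1 ∧ ∀ n, (g n).1 = evenMap l ζ n.1) ∨
    (l ^ 3 = -1 ∧ ∀ n, (g n).1 = oddMap l ζ n.1))}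
  one_mem' := ⟨1, 1, one_pow _, .inl ⟨one_pow _, fun n => (evenMap_one _).symm⟩⟩
  mul_mem' := by
    rintro g g' ⟨l, ζ, hζ, h⟩ ⟨l', ζ', hζ', h'⟩
    have hi := inv_pow_five hζ'
    rcases h with ⟨hl, h⟩ | ⟨hl, h⟩ <;> rcases h' with ⟨hl', h'⟩ | ⟨hl', h'⟩
    · refine ⟨l * l', ζ * ζ', by rw [mul_pow, hζ, hζ', one_mul], .inl ⟨?_, fun n => ?_⟩⟩
      · rw [mul_pow, hl, hl', one_mul]
      · rw [Equiv.Perm.mul_apply, h, h', evenMap_evenMap]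
    · refine ⟨l * l', ζ * ζ', by rw [mul_pow, hζ, hζ', one_mul], .inr ⟨?_, fun n => ?_⟩⟩
      · rw [mul_pow, hl, hl', one_mul]
      · rw [Equiv.Perm.mul_apply, h, h', evenMap_oddMap]
    · refine ⟨l * l', ζ * ζ'⁻¹, by rw [mul_pow, hζ, hi, one_mul], .inr ⟨?_, fun n => ?_⟩⟩
      · rw [mul_pow, hl, hl', mul_one]
      · rw [Equiv.Perm.mul_apply, h, h', oddMap_evenMap]
    · refine ⟨l * l', ζ * ζ'⁻¹, by rw [mul_pow, hζ, hi, one_mul], .inl ⟨?_, fun n => ?_⟩⟩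
      · rw [mul_pow, hl, hl']; norm_num
      · rw [Equiv.Perm.mul_apply, h, h', oddMap_oddMap]
  inv_mem' := by
    rintro g ⟨l, ζ, hζ, ⟨hl, h⟩ | ⟨hl, h⟩⟩
    · have : g = evenPerm l ζ hl hζ := Equiv.ext fun n => Subtype.ext (h n)
      exact ⟨l⁻¹, ζ⁻¹, inv_pow_five hζ, .inl ⟨by rw [inv_pow, hl, inv_one],
        fun n => by rw [this]; rfl⟩⟩
    · have : g = oddPerm l ζ hl hζ := Equiv.ext fun n => Subtype.ext (h n)
      exact ⟨l⁻¹, ζ, hζ, .inr ⟨by rw [inv_pow, hl]; norm_num, fun n => by rw [this]; rfl⟩⟩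

instance : ContinuousConstSMul deckGroup coverSet where
  continuous_const_smul := by
    rintro ⟨g, l, ζ, hζ, ⟨hl, h⟩ | ⟨hl, h⟩⟩
    · refine continuous_induced_rng.mpr ?_
      change Continuous fun n => (g n).1
      simp only [h, evenMap]
      fun_prop
    · refine continuous_induced_rng.mpr ?_
      change Continuous fun n => (g n).1
      simp only [h, oddMap]
      fun_prop

instance : Finite deckGroup := by
  have h6 : {l : ℂ | l ^ 6 = 1}.Finite := by
    refine (Polynomial.nthRoots 6 (1 : ℂ)).toFinset.finite_toSet.subset fun l hl => ?_
    simpa [Polynomial.mem_nthRoots] using hl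
  have h5 : {l : ℂ | l ^ 5 = 1}.Finite := by
    refine (Polynomial.nthRoots 5 (1 : ℂ)).toFinset.finite_toSet.subset fun l hl => ?_
    simpa [Polynomial.mem_nthRoots] using hl
  have key (g : deckGroup) : ∃ d : {l : ℂ | l ^ 6 = 1} × {l : ℂ | l ^ 5 = 1},
      ∀ n, (g.1 n).1 =
        if d.1.1 ^ 3 = 1 then evenMap d.1 d.2 n.1 else oddMap d.1 d.2 n.1 := by
    obtain ⟨g, l, ζ, hζ, ⟨hl, h⟩ | ⟨hl, h⟩⟩ := g
    · refine ⟨(⟨l, ?_⟩, ⟨ζ, hζ⟩), fun n => ?_⟩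
      · change l ^ 6 = 1
        linear_combination (l ^ 3 + 1) * hl
      · simp only [hl, if_true, h]
    · refine ⟨(⟨l, ?_⟩, ⟨ζ, hζ⟩), fun n => ?_⟩
      · change l ^ 6 = 1
        linear_combination (l ^ 3 - 1) * hl
      · rw [if_neg (by rw [hl]; norm_num), h]
  choose d hd using key
  have := h6.to_subtype
  have := h5.to_subtype
  refine Finite.of_injective d fun g g' hgg => Subtype.ext <| Equiv.ext fun n => Subtype.ext ?_
  rw [hd, hd, hgg]

/-- Deck transformations act freely: `l p = p` forces `l = 1`, which excludes the exchange of
`u` and `v`, and `u`, `v` do not vanish simultaneously. -/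
instance : IsCancelSMul deckGroup coverSet := by
  refine isCancelSMul_iff_eq_one_of_smul_eq.mpr ?_
  rintro ⟨g, l, ζ, hζ, hg⟩ n hn
  have hn' : (g n).1 = n.1 := congrArg Subtype.val hn
  have hp0 := ne_zero_of_sexticFun_ne_zero (sexticFun_ne_zero_of_mem n)
  have hl1 (h : l • n.1.1 = n.1.1) : l = 1 := by
    have : (l - 1) • n.1.1 = 0 := by rw [sub_smul, h, one_smul, sub_self]
    rcases smul_eq_zero.mp this with h | h
    · linear_combination h
    · exact absurd h hp0
  rcases hg with ⟨hl, h⟩ | ⟨hl, h⟩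
  · rw [h] at hn'
    obtain rfl := hl1 (congrArg Prod.fst hn')
    have e1 : 1 * ζ * n.1.2.1 = n.1.2.1 := congrArg (fun m => m.2.1) hn'
    have e2 : 1 * ζ⁻¹ * n.1.2.2 = n.1.2.2 := congrArg (fun m => m.2.2) hn'
    rw [one_mul] at e1 e2
    obtain rfl : ζ = 1 := by
      rcases coverSet_ne n with hu | hv
      · exact mul_right_cancel₀ hu (by rw [e1, one_mul])
      · exact inv_eq_one.mp (mul_right_cancel₀ hv (by rw [e2, one_mul]))
    refine Subtype.ext <| Equiv.ext fun n => Subtype.ext ?_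
    rw [h, evenMap_one]; rfl
  · rw [h] at hn'
    obtain rfl := hl1 (congrArg Prod.fst hn')
    norm_num at hl

/-- The fibres of `coverMap` are the orbits of `deckGroup`: the ratio of two representatives with
`F = 4` is a sixth root of unity `l`, and `l³ = ±1` decides whether `u` and `v` are exchanged. -/
lemma coverMap_eq_iff {n n' : coverSet} :
    coverMap n = coverMap n' ↔ n ∈ MulAction.orbit deckGroup n' := by
  rw [coverMap, coverMap, toComplement_eq_iff]
  constructor
  · rintro ⟨l, hl⟩
    obtain ⟨⟨p, u, v⟩, hS, hu, hv, huv⟩ := n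
    have hne := coverSet_ne n'
    obtain ⟨⟨p', u', v'⟩, hn'⟩ := n'
    have ⟨hS', hu', hv', huv'⟩ := hn'
    simp only at hl hS hu hv huv hS' hu' hv' huv' hne
    obtain rfl := hl
    rw [sexticFun_smul, hS'] at hS
    rw [quinticFun_smul] at hu hv
    rw [quadFun_smul] at huv
    simp only [Pi.smul_apply, smul_eq_mul] at hu hv
    have hl6 : l ^ 6 = 1 := by linear_combination hS / 4
    have hl0 : l ≠ 0 := by rintro rfl; norm_num at hl6
    have : (l ^ 3 - 1) * (l ^ 3 + 1) = 0 := by linear_combination hl6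
    rcases mul_eq_zero.mp this with h | h
    · have h3 : l ^ 3 = 1 := by linear_combination h
      obtain ⟨ζ, hζ, rfl, rfl⟩ := exists_root_of_unity (a := l * u') (b := l * v')
        (u := u) (v := v)
        (by linear_combination (hu - l ^ 5 * hu') / 2 - l ^ 2 * p' 2 ^ 2 * h3)
        (by linear_combination (hv - l ^ 5 * hv') / 2 + l ^ 2 * p' 2 ^ 2 * h3)
        (by linear_combination huv - l ^ 2 * huv')
        (hne.imp (mul_ne_zero hl0) (mul_ne_zero hl0))
      refine ⟨⟨evenPerm l ζ h3 hζ, l, ζ, hζ, .inl ⟨h3, fun n => rfl⟩⟩, Subtype.ext ?_⟩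
      change evenMap l ζ (p', u', v') = _
      simp only [evenMap, Prod.mk.injEq, true_and]
      constructor <;> ring
    · have h3 : l ^ 3 = -1 := by linear_combination h
      obtain ⟨ζ, hζ, rfl, rfl⟩ := exists_root_of_unity (a := l * v') (b := l * u')
        (u := u) (v := v)
        (by linear_combination (hu - l ^ 5 * hv') / 2 + l ^ 2 * p' 2 ^ 2 * h3)
        (by linear_combination (hv - l ^ 5 * hu') / 2 - l ^ 2 * p' 2 ^ 2 * h3)
        (by linear_combination huv - l ^ 2 * huv')
        (hne.symm.imp (mul_ne_zero hl0) (mul_ne_zero hl0))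
      refine ⟨⟨oddPerm l ζ h3 hζ, l, ζ, hζ, .inr ⟨h3, fun n => rfl⟩⟩, Subtype.ext ?_⟩
      change oddMap l ζ (p', u', v') = _
      simp only [oddMap, Prod.mk.injEq, true_and]
      constructor <;> ring
  · rintro ⟨⟨g, l, ζ, hζ, ⟨hl, h⟩ | ⟨hl, h⟩⟩, rfl⟩
    · exact ⟨l, (congrArg Prod.fst (h n')).symm⟩
    · exact ⟨l, (congrArg Prod.fst (h n')).symm⟩

lemma isQuotientCoveringMap_coverMap : IsQuotientCoveringMap coverMap deckGroup :=
  isQuotientMap_coverMap.isQuotientCoveringMap_of_properlyDiscontinuousSMul coverMap_eq_iff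

/-! ### Two non-commuting loops -/

/-- Two non-commuting deck transformations, each moving `e` within its path component, produce
two non-commuting loops at `f e`. -/
lemma exists_not_commute_of_joined {E X G : Type*} [TopologicalSpace E] [TopologicalSpace X]
    [Group G] [MulAction G E] {f : E → X} (hf : IsQuotientCoveringMap f G) {e : E} {g h : G}
    (hg : Joined e (g • e)) (hh : Joined e (h • e)) (hgh : h * g ≠ g * h) :
    ∃ a b : FundamentalGroup X (f e), a * b ≠ b * a := by
  have key (g : G) (hg : Joined e (g • e)) : ∃ a : FundamentalGroup X (f e),
      hf.fundamentalGroupToMulOpposite ⟨e, rfl⟩ a = MulOpposite.op g := by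
    obtain ⟨Γ⟩ := hg
    let e' : f ⁻¹' {f e} := ⟨g • e, hf.map_smul g⟩
    let γ : Path (f e) (f e) := (Γ.map hf.continuous).cast rfl e'.2.symm
    refine ⟨.fromPath ⟦γ⟧, ?_⟩
    rw [IsQuotientCoveringMap.fundamentalGroupToMulOpposite_apply_eq_Iff]
    change (e' : E) = _
    have := hf.isCoveringMap.monodromy_eq_of_map_eq (γ := ⟦γ⟧) (ex := ⟨e, rfl⟩) (ey := e')
      (Γ := ⟦Γ⟧) rfl
    rw [← this]
  obtain ⟨a, ha⟩ := key g hg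
  obtain ⟨b, hb⟩ := key h hh
  refine ⟨a, b, fun hab => hgh ?_⟩
  have := congrArg (hf.fundamentalGroupToMulOpposite ⟨e, rfl⟩) hab
  rw [map_mul, map_mul, ha, hb, ← MulOpposite.op_mul, ← MulOpposite.op_mul] at this
  exact MulOpposite.op_injective this

/-- The base point `((y, x, z), u, v) = ((0, 0, 1), 1, -1)` of the cover. -/
def basePt : coverSet :=
  ⟨(![0, 0, 1], 1, -1), by simp [sexticFun], by simp [quinticFun],
    by simp [quinticFun]; norm_num, by simp [quadFun]⟩

/-- The part of the cover over the line `x = 0`, parametrized by `y / z = 2 sinh τ`. -/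
lemma mem_coverSet_of_cosh {τ l : ℂ} (hl0 : l ≠ 0) (hl : l ^ 3 = Complex.cosh τ) :
    ((![2 * Complex.sinh τ / l, 0, 1 / l], Complex.exp (τ / 5) / l,
      -Complex.exp (-(τ / 5)) / l) : (Fin 3 → ℂ) × ℂ × ℂ) ∈ coverSet := by
  have e1 : Complex.exp (τ / 5) ^ 5 = Complex.exp τ := by
    rw [← Complex.exp_nat_mul]; congr 1; push_cast; ring
  have e2 : Complex.exp (-(τ / 5)) ^ 5 = Complex.exp (-τ) := by
    rw [← Complex.exp_nat_mul]; congr 1; push_cast; ring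
  have e3 : Complex.exp (τ / 5) * Complex.exp (-(τ / 5)) = 1 := by
    rw [← Complex.exp_add, ← Complex.exp_zero]; congr 1; ring
  have e4 := Complex.cosh_add_sinh τ
  have e5 := Complex.cosh_sub_sinh τ
  have e6 := Complex.cosh_sq τ
  refine ⟨?_, ?_, ?_, ?_⟩ <;> simp [sexticFun, quinticFun, quadFun]
  · field_simp
    linear_combination (-4) * e6 - 4 * (l ^ 3 + Complex.cosh τ) * hl
  · field_simp
    linear_combination e1 - e4 - hl
  · field_simp
    linear_combination -e2 + e5 + hl
  · field_simp
    linear_combination -e3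

/-- The path `s ↦ s (1 - s) + ε π i s` from `0` to `ε π i`, avoiding the zeros of `cosh`. -/
def tauPath (ε s : ℝ) : ℂ := ((s * (1 - s) : ℝ) : ℂ) + ((ε * Real.pi * s : ℝ) : ℂ) * Complex.I

/-- Along `tauPath` the number `(1 + exp (-2τ)) / 2 = exp (-τ) cosh τ` stays in the right half plane. -/
lemma one_add_exp_re_pos (ε : ℝ) (hε : ε = 1 ∨ ε = -1) (s : ℝ) (hs : s ∈ Set.Icc (0 : ℝ) 1) :
    0 < ((1 + Complex.exp (-2 * tauPath ε s)) / 2).re := by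
  have h1 : -2 * tauPath ε s = ((-2 * (s * (1 - s)) : ℝ) : ℂ)
      + ((-(2 * (ε * Real.pi * s)) : ℝ) : ℂ) * Complex.I := by
    simp only [tauPath]; push_cast; ring
  have h2 : (Complex.exp (-2 * tauPath ε s)).re
      = Real.exp (-2 * (s * (1 - s))) * Real.cos (2 * Real.pi * s) := by
    rw [h1, Complex.exp_re]
    rcases hε with rfl | rfl <;> simp [mul_assoc]
  rw [Complex.div_ofNat_re, Complex.add_re, h2, Complex.one_re]
  rcases eq_or_lt_of_le hs.1 with rfl | h0
  · simp
  rcases eq_or_lt_of_le hs.2 with rfl | h1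
  · simp
  have hlt : Real.exp (-2 * (s * (1 - s))) < 1 := by
    rw [Real.exp_lt_one_iff]
    nlinarith
  have hpos := Real.exp_pos (-2 * (s * (1 - s)))
  have := Real.neg_one_le_cos (2 * Real.pi * s)
  nlinarith

/-- A continuous cube root of `cosh` along `tauPath`. -/
def cubeRootCosh (ε s : ℝ) : ℂ :=
  Complex.exp ((tauPath ε s + Complex.log ((1 + Complex.exp (-2 * tauPath ε s)) / 2)) / 3)

lemma cubeRootCosh_pow (ε : ℝ) (hε : ε = 1 ∨ ε = -1) (s : ℝ) (hs : s ∈ Set.Icc (0 : ℝ) 1) :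
    cubeRootCosh ε s ^ 3 = Complex.cosh (tauPath ε s) := by
  have h0 : (1 + Complex.exp (-2 * tauPath ε s)) / 2 ≠ 0 := by
    intro h
    have := one_add_exp_re_pos ε hε s hs
    rw [h] at this
    simp at this
  rw [cubeRootCosh, ← Complex.exp_nat_mul]
  have : ((3 : ℕ) : ℂ) * ((tauPath ε s
      + Complex.log ((1 + Complex.exp (-2 * tauPath ε s)) / 2)) / 3) =
      tauPath ε s + Complex.log ((1 + Complex.exp (-2 * tauPath ε s)) / 2) := by
    push_cast; ring
  rw [this, Complex.exp_add, Complex.exp_log h0, Complex.cosh]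
  have : Complex.exp (-tauPath ε s)
      = Complex.exp (tauPath ε s) * Complex.exp (-2 * tauPath ε s) := by
    rw [← Complex.exp_add]; congr 1; ring
  rw [this]; ring

/-- The cube root of `-1` by which the lifted loop rescales the base point. -/
def rootL (ε : ℝ) : ℂ := Complex.exp (((-(ε * Real.pi / 3) : ℝ) : ℂ) * Complex.I)

/-- The fifth root of unity attached to the lifted loop. -/
def rootZ (ε : ℝ) : ℂ := -Complex.exp (((ε * Real.pi / 5 : ℝ) : ℂ) * Complex.I)

lemma exp_eps_pi {ε : ℝ} (hε : ε = 1 ∨ ε = -1) :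
    Complex.exp (((ε * Real.pi : ℝ) : ℂ) * Complex.I) = -1 := by
  rcases hε with rfl | rfl
  · simp
  · simp [Complex.exp_neg]

lemma rootL_pow {ε : ℝ} (hε : ε = 1 ∨ ε = -1) : rootL ε ^ 3 = -1 := by
  rw [rootL, ← Complex.exp_nat_mul, ← exp_eps_pi (ε := -ε) (by rcases hε with rfl | rfl <;> simp)]
  congr 1; push_cast; ring

lemma rootZ_pow {ε : ℝ} (hε : ε = 1 ∨ ε = -1) : rootZ ε ^ 5 = 1 := by
  have : Complex.exp (((ε * Real.pi / 5 : ℝ) : ℂ) * Complex.I) ^ 5 = -1 := by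
    rw [← Complex.exp_nat_mul, ← exp_eps_pi hε]
    congr 1; push_cast; ring
  rw [rootZ, neg_pow, this]; norm_num

/-- The deck transformation carrying the base point to the end of the lifted loop. -/
def deckElt {ε : ℝ} (hε : ε = 1 ∨ ε = -1) : deckGroup :=
  ⟨oddPerm (rootL ε) (rootZ ε) (rootL_pow hε) (rootZ_pow hε), rootL ε, rootZ ε, rootZ_pow hε,
    .inr ⟨rootL_pow hε, fun _ => rfl⟩⟩

lemma joined_deckElt {ε : ℝ} (hε : ε = 1 ∨ ε = -1) : Joined basePt (deckElt hε • basePt) := by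
  have hτ : Continuous (tauPath ε) := by unfold tauPath; fun_prop
  have hlog : Continuous fun s : unitInterval =>
      Complex.log ((1 + Complex.exp (-2 * tauPath ε s)) / 2) := by
    refine Continuous.clog (by fun_prop) fun s => ?_
    exact Complex.mem_slitPlane_iff.mpr (.inl (one_add_exp_re_pos ε hε s s.2))
  have hroot : Continuous fun s : unitInterval => cubeRootCosh ε s := by
    unfold cubeRootCosh; fun_prop
  have h0 (s : ℝ) : cubeRootCosh ε s ≠ 0 := Complex.exp_ne_zero _
  have hinv : Continuous fun s : unitInterval => (cubeRootCosh ε s)⁻¹ := hroot.inv₀ fun s => h0 s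
  let F (s : unitInterval) : coverSet :=
    ⟨_, mem_coverSet_of_cosh (h0 s) (cubeRootCosh_pow ε hε s s.2)⟩
  have hF : Continuous F := by
    refine Continuous.subtype_mk ?_ _
    refine Continuous.prodMk ?_ (Continuous.prodMk ?_ ?_)
    · refine continuous_pi fun i => ?_
      fin_cases i
      · simp only [div_eq_mul_inv]
        exact (continuous_const.mul (Complex.continuous_sinh.comp
          (hτ.comp continuous_subtype_val))).mul hinv
      · exact continuous_const
      · simp only [div_eq_mul_inv]
        exact continuous_const.mul hinv
    · simp only [div_eq_mul_inv _ (cubeRootCosh _ _)]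
      exact Continuous.mul (by fun_prop) hinv
    · simp only [div_eq_mul_inv _ (cubeRootCosh _ _)]
      exact Continuous.mul (by fun_prop) hinv
  have t0 : tauPath ε 0 = 0 := by simp [tauPath]
  have t1 : tauPath ε 1 = ((ε * Real.pi : ℝ) : ℂ) * Complex.I := by simp [tauPath]
  have r0 : cubeRootCosh ε 0 = 1 := by simp [cubeRootCosh, t0]
  have r1 : (cubeRootCosh ε 1)⁻¹ = rootL ε := by
    have : Complex.exp (-2 * tauPath ε 1) = 1 := by
      have h : -2 * tauPath ε 1 = -(tauPath ε 1) + -(tauPath ε 1) := by ring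
      rw [h, Complex.exp_add, Complex.exp_neg, t1, exp_eps_pi hε]; norm_num
    rw [cubeRootCosh, this, rootL, ← Complex.exp_neg, t1]
    congr 1
    norm_num
    ring
  have s1 : Complex.sinh (tauPath ε 1) = 0 := by
    rw [Complex.sinh, Complex.exp_neg, t1, exp_eps_pi hε]; norm_num
  refine ⟨⟨⟨F, hF⟩, Subtype.ext ?_, Subtype.ext ?_⟩⟩
  · simp [F, basePt, t0, r0]
  · change _ = oddMap (rootL ε) (rootZ ε) _
    simp only [F, basePt, oddMap, Set.Icc.coe_one, s1, div_eq_mul_inv _ (cubeRootCosh _ _), r1]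
    refine Prod.ext ?_ (Prod.ext ?_ ?_)
    · ext i; fin_cases i <;> simp
    · simp only [rootZ, t1]
      have : ((ε * Real.pi : ℝ) : ℂ) * Complex.I / 5
        = ((ε * Real.pi / 5 : ℝ) : ℂ) * Complex.I := by push_cast; ring
      rw [this]; ring
    · simp only [rootZ, t1]
      have : -(((ε * Real.pi : ℝ) : ℂ) * Complex.I / 5)
        = -(((ε * Real.pi / 5 : ℝ) : ℂ) * Complex.I) := by push_cast; ring
      rw [this, Complex.exp_neg, inv_neg]; ring

/-- The two products send `u = 1` to `l l' ζ ζ'⁻¹` and `l l' ζ' ζ⁻¹`, which differ because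
`ζ² = exp (2πi/5)` and `ζ'² = exp (-2πi/5)`. -/
lemma deckElt_not_commute :
    deckElt (ε := -1) (.inr rfl) * deckElt (ε := 1) (.inl rfl)
      ≠ deckElt (ε := 1) (.inl rfl) * deckElt (ε := -1) (.inr rfl) := by
  intro h
  have h1 := congrArg (fun g : deckGroup => (g.1 basePt).1.2.1) h
  change (oddMap _ _ (oddMap _ _ _)).2.1 = (oddMap _ _ (oddMap _ _ _)).2.1 at h1
  rw [oddMap_oddMap, oddMap_oddMap] at h1
  simp only [evenMap, basePt, mul_one] at h1
  have hl1 := ne_zero_of_cube (.inr (rootL_pow (ε := 1) (.inl rfl)))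
  have hl2 := ne_zero_of_cube (.inr (rootL_pow (ε := -1) (.inr rfl)))
  have hz1 := ne_zero_of_pow_five (rootZ_pow (ε := 1) (.inl rfl))
  have hz2 := ne_zero_of_pow_five (rootZ_pow (ε := -1) (.inr rfl))
  have h2 : rootZ 1 ^ 2 = rootZ (-1) ^ 2 := by
    field_simp at h1
    exact h1.symm
  have e (ε : ℝ) : (rootZ ε ^ 2).im = Real.sin (ε * (2 * Real.pi / 5)) := by
    rw [rootZ, neg_sq, ← Complex.exp_nat_mul, ← Complex.exp_ofReal_mul_I_im]
    congr 2; push_cast; ring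
  have h3 := congrArg Complex.im h2
  rw [e, e, one_mul, neg_one_mul, Real.sin_neg] at h3
  have := Real.sin_pos_of_pos_of_lt_pi (x := 2 * Real.pi / 5) (by positivity)
    (by linarith [Real.pi_pos])
  linarith

instance : PathConnectedSpace (CurveComplement sextic) where
  nonempty := ⟨coverMap basePt⟩
  joined x y := by
    obtain ⟨p, hp, rfl⟩ := exists_eq_toComplement x
    obtain ⟨q, hq, rfl⟩ := exists_eq_toComplement y
    -- the line through `p` and `q` meets the cone over the curve in finitely many points
    let P : Polynomial ℂ := aeval (fun i => Polynomial.C (p i)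
      + Polynomial.X * Polynomial.C (q i - p i)) sextic
    have hP (t : ℂ) : P.eval t = sexticFun (p + t • (q - p)) := by
      simp [P, sextic, sexticFun]
    have hP0 : P ≠ 0 := by
      intro h
      have := hP 0
      rw [h] at this
      simp at this
      exact hp this.symm
    have hfin : {t : ℂ | sexticFun (p + t • (q - p)) = 0}.Finite := by
      refine P.roots.toFinset.finite_toSet.subset fun t ht => ?_
      simpa [hP0, hP] using ht
    have hconn := hfin.countable.isPathConnected_compl_of_one_lt_rank
      (by rw [Complex.rank_real_complex]; norm_num)
    let L (t : ({t : ℂ | sexticFun (p + t • (q - p)) = 0}ᶜ : Set ℂ)) : CurveComplement sextic :=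
      toComplement (p + t.1 • (q - p)) t.2
    have hL : Continuous L := continuous_toComplement.comp
      (Continuous.subtype_mk (by fun_prop) fun t => t.2)
    have m0 : (0 : ℂ) ∈ ({t : ℂ | sexticFun (p + t • (q - p)) = 0}ᶜ : Set ℂ) := by
      simpa using hp
    have m1 : (1 : ℂ) ∈ ({t : ℂ | sexticFun (p + t • (q - p)) = 0}ᶜ : Set ℂ) := by
      simpa using hq
    obtain ⟨γ⟩ := (hconn.joinedIn 0 m0 1 m1).joined_subtype
    refine ⟨(γ.map hL).cast ?_ ?_⟩
    · simp [L]
    · simp [L]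

lemma sextic_nonabelian (x : CurveComplement sextic) :
    ∃ a b : FundamentalGroup (CurveComplement sextic) x, a * b ≠ b * a := by
  obtain ⟨a, b, hab⟩ := exists_not_commute_of_joined isQuotientCoveringMap_coverMap
    (joined_deckElt (ε := 1) (.inl rfl)) (joined_deckElt (ε := -1) (.inr rfl)) deckElt_not_commute
  let φ := FundamentalGroup.fundamentalGroupMulEquivOfPathConnected (coverMap basePt) x
  refine ⟨φ a, φ b, fun h => hab (φ.injective ?_)⟩
  rw [map_mul, map_mul, h]

/-- There is an irreducible plane sextic which is not of torus type but whose
fundamental group is nonabelian (disproving Oka'\''s original conjecture). -/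
theorem stmt10 :
    ∃ F : MvPolynomial (Fin 3) ℂ, F.IsHomogeneous 6 ∧ Irreducible F ∧
      ¬ IsTorusType F ∧
      ∀ p : CurveComplement F,
        ∃ a b : FundamentalGroup (CurveComplement F) p, a * b ≠ b * a := by
  exact ⟨sextic, sextic_homog, sextic_irreducible,
    fun ⟨f2, f3, h2, h3, h⟩ => sextic_not_torus f2 f3 h2 h3 h, sextic_nonabelian⟩
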